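/- arXiv:math/0405450 — 2 statements merged into one kernel-verified Lean document; each statement's English description precedes it below -/
import Mathlib

section
/- Let H be a subgroup of G̃ such that the projection of H to the second factor GL₂(𝔽₂) is all of GL₂(𝔽₂), and suppose H contains an element of order 4 or of order 6. Then H contains a subgroup isomorphic to S₃ × C₂ or a subgroup isomorphic to S₄. -/
open Matrix

abbrev F2 := ZMod 2

/-- Conjugation by `C ∈ GL₂(R)` as an automorphism of the additive group of `2×2`
matrices over `R` (written multiplicatively). -/
def conjAut {R : Type} [CommRing R] (C : GL (Fin 2) R) :
    MulAut (Multiplicative (Matrix (Fin 2) (Fin 2) R)) where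
  toFun A := Multiplicative.ofAdd
    ((C : Matrix (Fin 2) (Fin 2) R) * (Multiplicative.toAdd A) *
      ((C⁻¹ : GL (Fin 2) R) : Matrix (Fin 2) (Fin 2) R))
  invFun A := Multiplicative.ofAdd
    (((C⁻¹ : GL (Fin 2) R) : Matrix (Fin 2) (Fin 2) R) * (Multiplicative.toAdd A) *
      (C : Matrix (Fin 2) (Fin 2) R))
  left_inv A := by simp [mul_assoc]
  right_inv A := by simp [mul_assoc]
  map_mul' A B := by
    simp [mul_add, add_mul, ← ofAdd_add]

/-- Conjugation as an action of `GL₂(R)` by automorphisms on the additive group of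
`2×2` matrices, i.e. the defining homomorphism of `M₂(R) ⋊ GL₂(R)`. -/
def conjHom (R : Type) [CommRing R] :
    GL (Fin 2) R →* MulAut (Multiplicative (Matrix (Fin 2) (Fin 2) R)) where
  toFun := conjAut
  map_one' := by ext A; simp [conjAut]
  map_mul' C D := by ext A; simp [conjAut, mul_assoc]

/-- `M₂(R) ⋊ GL₂(R)`, the semidirect product of the additive group of `2×2` matrices
by `GL₂(R)` acting by conjugation; the group law is `(A,C)·(B,D) = (A + C B C⁻¹, C D)`. -/
abbrev MGL (R : Type) [CommRing R] :=
  SemidirectProduct (Multiplicative (Matrix (Fin 2) (Fin 2) R)) (GL (Fin 2) R) (conjHom R)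

lemma trace_conj_GL {R : Type} [CommRing R] (C : GL (Fin 2) R)
    (M : Matrix (Fin 2) (Fin 2) R) :
    ((C : Matrix (Fin 2) (Fin 2) R) * M *
      ((C⁻¹ : GL (Fin 2) R) : Matrix (Fin 2) (Fin 2) R)).trace = M.trace := by
  rw [Matrix.trace_mul_cycle]
  simp [mul_assoc]

/-- `G̃`: the subgroup of `M₂(𝔽₂) ⋊ GL₂(𝔽₂)` of pairs `(A, C)` with `tr A = 0`. -/
def Gtilde : Subgroup (MGL F2) where
  carrier := {x | Matrix.trace (Multiplicative.toAdd x.left) = 0}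
  one_mem' := by simp
  mul_mem' {x y} hx hy := by
    have hx' : Matrix.trace (Multiplicative.toAdd x.left) = 0 := hx
    have hy' : Matrix.trace (Multiplicative.toAdd y.left) = 0 := hy
    show Matrix.trace (Multiplicative.toAdd (x * y).left) = 0
    rw [SemidirectProduct.mul_left]
    show Matrix.trace (Multiplicative.toAdd x.left +
      ((x.right : Matrix (Fin 2) (Fin 2) F2) * (Multiplicative.toAdd y.left) *
        ((x.right⁻¹ : GL (Fin 2) F2) : Matrix (Fin 2) (Fin 2) F2))) = 0
    rw [Matrix.trace_add, trace_conj_GL, hx', hy', add_zero]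
  inv_mem' {x} hx := by
    have hx' : Matrix.trace (Multiplicative.toAdd x.left) = 0 := hx
    show Matrix.trace (Multiplicative.toAdd x⁻¹.left) = 0
    rw [SemidirectProduct.inv_left]
    show Matrix.trace
      (((x.right⁻¹ : GL (Fin 2) F2) : Matrix (Fin 2) (Fin 2) F2) *
        (Multiplicative.toAdd x.left⁻¹) *
        ((x.right⁻¹⁻¹ : GL (Fin 2) F2) : Matrix (Fin 2) (Fin 2) F2)) = 0
    rw [trace_conj_GL]
    simp [hx']

/-!
Over `𝔽₂` the trace zero matrices form, as a `GL₂(𝔽₂)`-module, the direct sum of the plane `𝔽₂²`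
and the scalar matrices, so that `G̃` embeds in `AGL₂(𝔽₂) × C₂ ≅ S₄ × C₂`. The image in
`AGL₂(𝔽₂)` of a subgroup of `G̃` projecting onto `GL₂(𝔽₂)` is either everything or a complement of
the translations, because the translations form an abelian minimal normal subgroup. Since a
subgroup of a product `P × C₂` either contains `C₂` or projects injectively to `P`, a subgroup of
`G̃` projecting onto `GL₂(𝔽₂)` contains a copy of `S₄` or is itself isomorphic to `S₃ × C₂` or to
`S₃`, and an element of order greater than 3 excludes the last case.
-/

section Supplements

open MonoidHom (fst inl inr inr_apply)

variable {G Q P C : Type*} [Group G] [Group Q] [Group P] [Group C]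

lemma nonempty_mulEquiv_map_of_injOn {f : G →* Q} {H : Subgroup G} (hf : Set.InjOn f H) :
    Nonempty (H ≃* H.map f) :=
  ⟨.ofBijective (f.subgroupMap H)
    ⟨fun x y hxy => Subtype.ext (hf x.2 y.2 (congrArg Subtype.val hxy)),
      f.subgroupMap_surjective H⟩⟩

lemma exists_le_mulEquiv_of_le_map {f : G →* Q} (hf : Function.Injective f) {H : Subgroup G}
    {K : Subgroup Q} (hK : K ≤ H.map f) : ∃ L ≤ H, Nonempty (L ≃* K) := by
  have hmap : (K.comap f).map f = K :=
    Subgroup.map_comap_eq_self (hK.trans (H.map_le_range f))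
  refine ⟨K.comap f, ?_, ⟨((K.comap f).equivMapOfInjective f hf).trans (.subgroupCongr hmap)⟩⟩
  rwa [← Subgroup.map_le_map_iff_of_injective hf, hmap]

lemma eq_map_fst_prod_top_or_injOn_fst [IsSimpleOrder (Subgroup C)] (H : Subgroup (P × C)) :
    H = (H.map (fst P C)).prod ⊤ ∨ Set.InjOn (fst P C) H := by
  rcases eq_bot_or_eq_top (H.comap (inr P C)) with hC | hC
  · refine .inr fun x hx y hy (hxy : x.1 = y.1) => ?_
    have hdiv : x / y = (1, x.2 / y.2) := Prod.ext (div_eq_one.2 hxy) rfl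
    have hmem : x.2 / y.2 ∈ H.comap (inr P C) := by
      simpa only [Subgroup.mem_comap, inr_apply, ← hdiv] using H.div_mem hx hy
    rw [hC, Subgroup.mem_bot, div_eq_one] at hmem
    exact Prod.ext hxy hmem
  · have hinr (c : C) : inr P C c ∈ H := Subgroup.mem_comap.1 (hC ▸ Subgroup.mem_top c)
    refine .inl (le_antisymm (Subgroup.le_prod_iff.2 ⟨le_rfl, le_top⟩) ?_)
    rintro ⟨_, c⟩ ⟨⟨x, hx, rfl⟩, -⟩
    have hxc : ((fst P C) x, c) = x * inr P C (x.2⁻¹ * c) := by ext <;> simp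
    exact hxc ▸ H.mul_mem hx (hinr _)

lemma exists_le_mulEquiv_map_fst [IsSimpleOrder (Subgroup C)] (H : Subgroup (P × C)) :
    ∃ K ≤ H, Nonempty (K ≃* H.map (fst P C)) := by
  rcases eq_map_fst_prod_top_or_injOn_fst H with hH | hH
  · refine ⟨(H.map (fst P C)).map (inl P C), ?_,
      ⟨((H.map (fst P C)).equivMapOfInjective _ (Prod.mk_left_injective 1)).symm⟩⟩
    conv_rhs => rw [hH]
    exact Subgroup.map_le_iff_le_comap.2 fun p hp => ⟨hp, Subgroup.mem_top 1⟩
  · exact ⟨H, le_rfl, nonempty_mulEquiv_map_of_injOn hH⟩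

lemma eq_top_or_disjoint_of_sup_eq_top {A N : Subgroup G} [N.Normal] [IsMulCommutative N]
    (hmin : ∀ M : Subgroup G, M.Normal → M ≤ N → M = ⊥ ∨ M = N) (hA : A ⊔ N = ⊤) :
    A = ⊤ ∨ Disjoint A N := by
  -- `A ⊓ N` is normalized by `A`, and centralized by the abelian group `N`.
  have hnormal : (A ⊓ N).Normal := by
    rw [← Subgroup.normalizer_eq_top_iff, eq_top_iff, ← hA, sup_le_iff]
    constructor
    · exact (le_inf Subgroup.le_normalizer Subgroup.le_normalizer_of_normal).trans
        Subgroup.inf_normalizer_le_normalizer_inf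
    · exact N.le_centralizer.trans ((Subgroup.centralizer_le inf_le_right).trans
        (Subgroup.centralizer_le_normalizer _))
  rcases hmin _ hnormal inf_le_right with h | h
  · exact .inr (disjoint_iff.2 h)
  · exact .inl (by rwa [sup_eq_left.2 (inf_eq_right.1 h)] at hA)

end Supplements

section AffineGroup

open MonoidHom (fst)

variable {K V P C : Type*} [AddCommGroup V] [AddTorsor V P] [Group C]

section Ring

variable [Ring K] [Module K V]

lemma ker_linearHom_eq_range_constVAddHom :
    (AffineEquiv.linearHom : (P ≃ᵃ[K] P) →* V ≃ₗ[K] V).ker =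
      (AffineEquiv.constVAddHom K P).range := by
  ext e
  constructor
  · intro (he : e.linear = 1)
    obtain ⟨p⟩ : Nonempty P := inferInstance
    refine ⟨.ofAdd (e p -ᵥ p), AffineEquiv.ext fun q => ?_⟩
    have hq : e q = (q -ᵥ p) +ᵥ e p := by simpa [he] using e.map_vadd p (q -ᵥ p)
    change (e p -ᵥ p) +ᵥ q = e q
    rw [hq, ← vsub_eq_zero_iff_eq, vadd_vsub_vadd_comm, vsub_sub_vsub_cancel_right,
      vsub_add_vsub_cancel, vsub_self]
  · rintro ⟨v, rfl⟩
    rfl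

instance : IsMulCommutative (AffineEquiv.linearHom : (P ≃ᵃ[K] P) →* V ≃ₗ[K] V).ker := by
  rw [ker_linearHom_eq_range_constVAddHom]
  infer_instance

lemma conj_constVAdd (e : P ≃ᵃ[K] P) (v : V) :
    e * AffineEquiv.constVAdd K P v * e⁻¹ = AffineEquiv.constVAdd K P (e.linear v) := by
  ext p
  simp [AffineEquiv.inv_def]

variable (K V) in
/-- The permutation representation of `GL(V)` on the nonzero vectors of `V`. -/
def permNonzero : (V ≃ₗ[K] V) →* Equiv.Perm {v : V // v ≠ 0} where
  toFun e := e.toEquiv.subtypeEquiv fun _ => e.map_ne_zero_iff.symm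
  map_one' := rfl
  map_mul' _ _ := rfl

variable (K P) in
/-- The permutation representation of the affine group on the points of an affine space. -/
def permPoints : (P ≃ᵃ[K] P) →* Equiv.Perm P where
  toFun e := e.toEquiv
  map_one' := rfl
  map_mul' _ _ := rfl

end Ring

variable [DivisionRing K] [Module K V]

lemma exists_linearEquiv_apply_eq {x y : V} (hx : x ≠ 0) (hy : y ≠ 0) :
    ∃ e : V ≃ₗ[K] V, e x = y := by
  let f := (LinearEquiv.toSpanNonzeroSingleton K V x hx).symm.trans
    (LinearEquiv.toSpanNonzeroSingleton K V y hy)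
  obtain ⟨e, he⟩ := Submodule.exists_linearEquiv_restrict_eq f
  refine ⟨e, (he ⟨x, Submodule.mem_span_singleton_self x⟩).symm.trans ?_⟩
  simp only [f, LinearEquiv.trans_apply, LinearEquiv.coord_self,
    LinearEquiv.toSpanNonzeroSingleton_one]

lemma eq_bot_or_eq_ker_linearHom_of_le {M : Subgroup (P ≃ᵃ[K] P)} [hM : M.Normal]
    (hle : M ≤ AffineEquiv.linearHom.ker) : M = ⊥ ∨ M = AffineEquiv.linearHom.ker := by
  refine or_iff_not_imp_left.2 fun hbot => le_antisymm hle ?_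
  obtain ⟨t, ht, ht1⟩ := M.bot_or_exists_ne_one.resolve_left hbot
  rw [ker_linearHom_eq_range_constVAddHom] at hle ⊢
  obtain ⟨v, rfl⟩ := hle ht
  have hv : v ≠ 1 := fun h => ht1 (by rw [h, map_one])
  rintro _ ⟨w, rfl⟩
  rcases eq_or_ne w 1 with rfl | hw
  · exact (map_one (AffineEquiv.constVAddHom K P)).symm ▸ M.one_mem
  obtain ⟨e, he⟩ := exists_linearEquiv_apply_eq (K := K) (x := v.toAdd) (y := w.toAdd) hv hw
  obtain ⟨p⟩ : Nonempty P := inferInstance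
  simpa [conj_constVAdd, he] using hM.conj_mem _ ht (AffineEquiv.ofLinearEquiv e p p)

lemma eq_top_or_injOn_linearHom {A : Subgroup (P ≃ᵃ[K] P)}
    (hA : A.map AffineEquiv.linearHom = ⊤) :
    A = ⊤ ∨ Set.InjOn AffineEquiv.linearHom (A : Set (P ≃ᵃ[K] P)) := by
  have hrange : (AffineEquiv.linearHom : (P ≃ᵃ[K] P) →* V ≃ₗ[K] V).range = ⊤ :=
    top_le_iff.1 (hA.ge.trans (A.map_le_range _))
  have hsup : A ⊔ AffineEquiv.linearHom.ker = ⊤ :=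
    codisjoint_iff.1 (Subgroup.map_eq_range_iff.1 (hA.trans hrange.symm))
  refine (eq_top_or_disjoint_of_sup_eq_top
    (fun M _ => eq_bot_or_eq_ker_linearHom_of_le) hsup).imp_right fun hdisj => ?_
  exact (Set.injOn_iff_map_eq_one _ A).2 fun x hx hker => Subgroup.disjoint_def.1 hdisj hx hker

theorem nonempty_mulEquiv_linear_or_linear_prod_or_exists_le_mulEquiv_affine
    [IsSimpleOrder (Subgroup C)] {H : Subgroup ((P ≃ᵃ[K] P) × C)}
    (hH : H.map (AffineEquiv.linearHom.comp (fst (P ≃ᵃ[K] P) C)) = ⊤) :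
    Nonempty (H ≃* (V ≃ₗ[K] V)) ∨ Nonempty (H ≃* (V ≃ₗ[K] V) × C) ∨
      ∃ L ≤ H, Nonempty (L ≃* (P ≃ᵃ[K] P)) := by
  set A := H.map (fst (P ≃ᵃ[K] P) C) with hA
  have hlin : A.map AffineEquiv.linearHom = ⊤ := by rw [hA, Subgroup.map_map, hH]
  rcases eq_top_or_injOn_linearHom hlin with htop | hinj
  · obtain ⟨L, hL, ⟨e⟩⟩ := exists_le_mulEquiv_map_fst H
    exact .inr (.inr ⟨L, hL, ⟨e.trans ((MulEquiv.subgroupCongr htop).trans Subgroup.topEquiv)⟩⟩)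
  obtain ⟨e⟩ := nonempty_mulEquiv_map_of_injOn hinj
  let eA : A ≃* (V ≃ₗ[K] V) := e.trans ((MulEquiv.subgroupCongr hlin).trans Subgroup.topEquiv)
  rcases eq_map_fst_prod_top_or_injOn_fst H with hprod | hfst
  · exact .inr (.inl ⟨(MulEquiv.subgroupCongr hprod).trans
      ((A.prodEquiv ⊤).trans (eA.prodCongr Subgroup.topEquiv))⟩)
  · obtain ⟨f⟩ := nonempty_mulEquiv_map_of_injOn hfst
    exact .inl ⟨f.trans eA⟩

end AffineGroup

section KleinFour

variable (V : Type*) [AddCommGroup V] [Module (ZMod 2) V] [IsAddKleinFour V]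

variable {V} in
/-- A permutation of a Klein four group fixing `0` is automatically linear over `𝔽₂`. -/
def linearEquivOfPerm (σ : Equiv.Perm V) (hσ : σ 0 = 0) : V ≃ₗ[ZMod 2] V :=
  (IsAddKleinFour.addEquiv' σ hσ IsAddKleinFour.exponent_two).toLinearEquiv (ZMod.map_smul _)

lemma permNonzero_bijective : Function.Bijective (permNonzero (ZMod 2) V) := by
  classical
  refine ⟨fun e f hef => LinearEquiv.ext fun v => ?_, fun σ => ?_⟩
  · rcases eq_or_ne v 0 with rfl | hv
    · rw [map_zero, map_zero]
    · exact congrArg Subtype.val (Equiv.congr_fun hef ⟨v, hv⟩)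
  · have hσ : Equiv.Perm.ofSubtype σ 0 = 0 :=
      Equiv.Perm.ofSubtype_apply_of_not_mem σ (not_not.2 rfl)
    exact ⟨linearEquivOfPerm _ hσ, Equiv.ext fun v =>
      Subtype.ext (Equiv.Perm.ofSubtype_apply_coe σ v)⟩

lemma permPoints_bijective : Function.Bijective (permPoints (ZMod 2) V) := by
  refine ⟨AffineEquiv.toEquiv_injective, fun σ => ?_⟩
  let τ : Equiv.Perm V := σ.trans (Equiv.addRight (-σ 0))
  have hτ : τ 0 = 0 := by simp [τ]
  refine ⟨.ofLinearEquiv (linearEquivOfPerm τ hτ) 0 (σ 0), Equiv.ext fun v => ?_⟩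
  change τ (v - 0) + σ 0 = σ v
  simp [τ]

lemma nonempty_linearEquiv_mulEquiv_perm_three :
    Nonempty ((V ≃ₗ[ZMod 2] V) ≃* Equiv.Perm (Fin 3)) := by
  have : Finite V := IsAddKleinFour.instFinite
  have hcard : Nat.card {v : V // v ≠ 0} = 3 := by
    classical
    have := Fintype.ofFinite V
    rw [Nat.card_eq_fintype_card, Fintype.card_subtype_compl, Fintype.card_subtype_eq,
      ← Nat.card_eq_fintype_card, IsAddKleinFour.card_four]
  exact ⟨(MulEquiv.ofBijective _ (permNonzero_bijective V)).trans
    (Finite.equivFinOfCardEq hcard).permCongrHom⟩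

lemma nonempty_affineEquiv_mulEquiv_perm_four :
    Nonempty ((V ≃ᵃ[ZMod 2] V) ≃* Equiv.Perm (Fin 4)) := by
  have : Finite V := IsAddKleinFour.instFinite
  exact ⟨(MulEquiv.ofBijective _ (permPoints_bijective V)).trans
    (Finite.equivFinOfCardEq IsAddKleinFour.card_four).permCongrHom⟩

end KleinFour

lemma orderOf_perm_three_le (σ : Equiv.Perm (Fin 3)) : orderOf σ ≤ 3 := by
  have h : ∀ σ : Equiv.Perm (Fin 3), σ ^ 2 = 1 ∨ σ ^ 3 = 1 := by decide
  rcases h σ with h2 | h3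
  · exact (orderOf_le_of_pow_eq_one two_pos h2).trans (Nat.le_succ 2)
  · exact orderOf_le_of_pow_eq_one three_pos h3

instance (p : ℕ) [Fact p.Prime] : IsSimpleOrder (Subgroup (Multiplicative (ZMod p))) := by
  have := isSimpleGroup_of_prime_card (α := Multiplicative (ZMod p)) (p := p) (by simp)
  infer_instance

instance : IsAddKleinFour (Fin 2 → F2) where
  card_four := by simp
  exponent_two := by
    simp only [AddMonoid.exponent_pi, ZMod.exponent]
    rfl

/-- The off-diagonal entries of a `2×2` matrix over `𝔽₂`. On the trace zero matrices this is the
quotient map by the scalar matrices, the quotient being identified with the plane `𝔽₂²`. -/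
def offDiag : Matrix (Fin 2) (Fin 2) F2 →+ (Fin 2 → F2) :=
  .mk' (fun A => ![A 0 1, A 1 0]) fun A B => by ext i; fin_cases i <;> rfl

/-- The linear form on `M₂(𝔽₂)` whose restriction to the trace zero matrices is the projection
to the scalar matrices along `{0} ∪ {involutions}`. -/
def scalarPart : Matrix (Fin 2) (Fin 2) F2 →+ F2 :=
  .mk' (fun A => A 0 0 + A 0 1 + A 1 0) fun A B => by simp only [Matrix.add_apply]; ring

lemma eq_of_offDiag_eq_of_scalarPart_eq {A B : Matrix (Fin 2) (Fin 2) F2} (hA : A.trace = 0)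
    (hB : B.trace = 0) (ho : offDiag A = offDiag B) (hs : scalarPart A = scalarPart B) :
    A = B := by
  have h01 : A 0 1 = B 0 1 := congrFun ho 0
  have h10 : A 1 0 = B 1 0 := congrFun ho 1
  have h00 : A 0 0 = B 0 0 := by simpa [scalarPart, h01, h10] using hs
  have h11 : A 1 1 = B 1 1 := by
    rw [Matrix.trace_fin_two] at hA hB
    rw [h00, ← hB] at hA
    exact add_left_cancel hA
  ext i j
  fin_cases i <;> fin_cases j <;> assumption

lemma coe_inv_eq_adjugate {n : Type*} [Fintype n] [DecidableEq n] (C : GL n F2) :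
    ((C⁻¹ : GL n F2) : Matrix n n F2) = adjugate C := by
  have hdet : (C : Matrix n n F2).det = 1 :=
    congrArg Units.val (Subsingleton.elim (GeneralLinearGroup.det C) 1)
  rw [coe_units_inv, inv_def, hdet, Ring.inverse_one, one_smul]

lemma offDiag_conj (C : GL (Fin 2) F2) {A : Matrix (Fin 2) (Fin 2) F2} (hA : A.trace = 0) :
    offDiag ((C : Matrix (Fin 2) (Fin 2) F2) * A * ((C⁻¹ : GL (Fin 2) F2) :
      Matrix (Fin 2) (Fin 2) F2)) = (C : Matrix (Fin 2) (Fin 2) F2) *ᵥ offDiag A := by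
  rw [coe_inv_eq_adjugate]
  generalize (C : Matrix (Fin 2) (Fin 2) F2) = M
  -- For `M = !![p, q; r, s]` and `A = !![a, b; c, a]` the off-diagonal entries of `M A adj(M)` are
  -- `p² b + q² c` and `r² b + s² c`.
  have hsq (a : F2) : a ^ 2 = a := ZMod.pow_card a
  rw [trace_fin_two] at hA
  ext i
  fin_cases i
  · simp only [offDiag, AddMonoidHom.mk'_apply, adjugate_fin_two, Fin.isValue,
      ZMod.neg_eq_self_mod_two, Matrix.mul_apply, Fin.sum_univ_two, of_apply, cons_val',
      cons_val_one, cons_val_fin_one, cons_val_zero, Fin.zero_eta, mulVec, dotProduct]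
    linear_combination A 0 1 * hsq (M 0 0) + A 1 0 * hsq (M 0 1) + M 0 0 * M 0 1 * hA
  · simp only [offDiag, AddMonoidHom.mk'_apply, adjugate_fin_two, Fin.isValue,
      ZMod.neg_eq_self_mod_two, Matrix.mul_apply, Fin.sum_univ_two, of_apply, cons_val',
      cons_val_one, cons_val_fin_one, cons_val_zero, Fin.mk_one, mulVec, dotProduct]
    linear_combination A 1 0 * hsq (M 1 1) + A 0 1 * hsq (M 1 0) + M 1 0 * M 1 1 * hA

-- The right-hand side is visibly invariant under conjugation.
lemma scalarPart_eq_det_add {A : Matrix (Fin 2) (Fin 2) F2} (hA : A.trace = 0) :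
    scalarPart A = A.det + if offDiag A = 0 then 0 else 1 := by
  revert A
  decide

lemma scalarPart_conj (C : GL (Fin 2) F2) {A : Matrix (Fin 2) (Fin 2) F2} (hA : A.trace = 0) :
    scalarPart ((C : Matrix (Fin 2) (Fin 2) F2) * A * ((C⁻¹ : GL (Fin 2) F2) :
      Matrix (Fin 2) (Fin 2) F2)) = scalarPart A := by
  have hzero : (C : Matrix (Fin 2) (Fin 2) F2) *ᵥ offDiag A = 0 ↔ offDiag A = 0 :=
    (mulVec_injective_of_isUnit C.isUnit).eq_iff' (mulVec_zero _)
  rw [scalarPart_eq_det_add hA, scalarPart_eq_det_add ((trace_conj_GL C A).trans hA),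
    offDiag_conj C hA, det_units_conj]
  simp only [hzero]

/-- `GL n R` as the group of linear automorphisms of `n → R`. -/
def linearEquivOfGL (n R : Type*) [Fintype n] [DecidableEq n] [CommRing R] :
    GL n R ≃* ((n → R) ≃ₗ[R] (n → R)) :=
  GeneralLinearGroup.toLin.trans (LinearMap.GeneralLinearGroup.generalLinearEquiv _ _)

namespace Gtilde

/-- The projection of `G̃` to `GL₂(𝔽₂)`. -/
def proj : Gtilde →* GL (Fin 2) F2 := SemidirectProduct.rightHom.comp Gtilde.subtype

/-- The matrix component of an element of `G̃`. -/
def mat (g : Gtilde) : Matrix (Fin 2) (Fin 2) F2 := Multiplicative.toAdd g.1.left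

lemma trace_mat (g : Gtilde) : (mat g).trace = 0 := g.2

lemma mat_mul (g h : Gtilde) :
    mat (g * h) = mat g + proj g * mat h * ((proj g)⁻¹ : GL (Fin 2) F2) := rfl

/-- The linear part of the affine action of `G̃` on the plane. -/
def linear : Gtilde →* ((Fin 2 → F2) ≃ₗ[F2] (Fin 2 → F2)) :=
  (linearEquivOfGL (Fin 2) F2).toMonoidHom.comp proj

lemma linear_apply (g : Gtilde) (v : Fin 2 → F2) :
    linear g v = (proj g : Matrix (Fin 2) (Fin 2) F2) *ᵥ v := rfl

/-- The affine action of `G̃` on the plane: `(A, C)` acts by `v ↦ offDiag A + C v`. -/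
def affine : Gtilde →* ((Fin 2 → F2) ≃ᵃ[F2] (Fin 2 → F2)) where
  toFun g := (linear g).toAffineEquiv.trans (AffineEquiv.constVAdd F2 _ (offDiag (mat g)))
  map_one' := by
    ext v : 1
    change offDiag 0 + linear 1 v = v
    rw [map_one, map_zero, zero_add, LinearEquiv.coe_one, id_eq]
  map_mul' g h := by
    ext v : 1
    change offDiag (mat (g * h)) + linear (g * h) v =
      offDiag (mat g) + linear g (offDiag (mat h) + linear h v)
    rw [mat_mul, map_add, offDiag_conj _ (trace_mat h), ← linear_apply, map_mul, map_add,
      add_assoc, LinearEquiv.mul_apply]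

lemma affine_apply (g : Gtilde) (v : Fin 2 → F2) :
    affine g v = offDiag (mat g) + linear g v := rfl

lemma map_linear_eq_top {H : Subgroup Gtilde} (hH : H.map proj = ⊤) : H.map linear = ⊤ := by
  rw [linear, ← Subgroup.map_map, hH]
  exact Subgroup.map_top_of_surjective _ (linearEquivOfGL (Fin 2) F2).surjective

/-- The character `(A, C) ↦ scalarPart A` of `G̃`. -/
def char : Gtilde →* Multiplicative F2 where
  toFun g := .ofAdd (scalarPart (mat g))
  map_one' := rfl
  map_mul' g h := by
    rw [mat_mul, map_add, scalarPart_conj _ (trace_mat h), ofAdd_add]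

lemma affine_prod_char_injective : Function.Injective (affine.prod char) := by
  intro g h hgh
  have haff : affine g = affine h := congrArg Prod.fst hgh
  have htrans : offDiag (mat g) = offDiag (mat h) := by
    simpa only [affine_apply, map_zero, add_zero] using DFunLike.congr_fun haff 0
  have hproj : proj g = proj h :=
    (linearEquivOfGL (Fin 2) F2).injective (congrArg AffineEquiv.linearHom haff)
  have hmat : mat g = mat h := eq_of_offDiag_eq_of_scalarPart_eq (trace_mat g) (trace_mat h) htrans
    (Multiplicative.ofAdd.injective (congrArg Prod.snd hgh))
  exact Subtype.ext (SemidirectProduct.ext (congrArg Multiplicative.ofAdd hmat) hproj)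

theorem nonempty_mulEquiv_perm_three_or_prod_or_exists_le_mulEquiv_perm_four {H : Subgroup Gtilde}
    (hH : H.map proj = ⊤) :
    Nonempty (H ≃* Equiv.Perm (Fin 3)) ∨
      Nonempty (H ≃* Equiv.Perm (Fin 3) × Multiplicative (ZMod 2)) ∨
      ∃ K ≤ H, Nonempty (K ≃* Equiv.Perm (Fin 4)) := by
  obtain ⟨e₃⟩ := nonempty_linearEquiv_mulEquiv_perm_three (Fin 2 → F2)
  obtain ⟨e₄⟩ := nonempty_affineEquiv_mulEquiv_perm_four (Fin 2 → F2)
  let e := H.equivMapOfInjective _ affine_prod_char_injective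
  have hlin : (H.map (affine.prod char)).map
      (AffineEquiv.linearHom.comp (MonoidHom.fst _ _)) = ⊤ := by
    rw [Subgroup.map_map]
    exact map_linear_eq_top hH
  rcases nonempty_mulEquiv_linear_or_linear_prod_or_exists_le_mulEquiv_affine hlin with
    ⟨⟨f⟩⟩ | ⟨⟨f⟩⟩ | ⟨L, hL, ⟨f⟩⟩
  · exact .inl ⟨e.trans (f.trans e₃)⟩
  · exact .inr (.inl ⟨e.trans (f.trans (e₃.prodCongr (.refl _)))⟩)
  · obtain ⟨K, hK, ⟨g⟩⟩ := exists_le_mulEquiv_of_le_map affine_prod_char_injective hL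
    exact .inr (.inr ⟨K, hK, ⟨g.trans (f.trans e₄)⟩⟩)

end Gtilde

/-- If a subgroup `H` of `G̃` projects onto all of `GL₂(𝔽₂)` and contains an element
of order 4 or 6, then `H` contains a subgroup isomorphic to `S₃ × C₂` or a subgroup
isomorphic to `S₄`. -/
theorem subgroup_contains_S3xC2_or_S4 (H : Subgroup ↥Gtilde)
    (hproj : H.map (SemidirectProduct.rightHom.comp Gtilde.subtype) = ⊤)
    (horder : ∃ x ∈ H, orderOf x = 4 ∨ orderOf x = 6) :
    (∃ K : Subgroup ↥Gtilde, K ≤ H ∧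
      Nonempty (↥K ≃* Equiv.Perm (Fin 3) × Multiplicative (ZMod 2))) ∨
    (∃ K : Subgroup ↥Gtilde, K ≤ H ∧ Nonempty (↥K ≃* Equiv.Perm (Fin 4))) := by
  rcases Gtilde.nonempty_mulEquiv_perm_three_or_prod_or_exists_le_mulEquiv_perm_four hproj with
    ⟨⟨e⟩⟩ | hH | hH
  · obtain ⟨x, hx, horder⟩ := horder
    have hle : orderOf x ≤ 3 := by
      rw [← Subgroup.orderOf_mk x hx, ← e.orderOf_eq]
      exact orderOf_perm_three_le _
    omega
  · exact .inl ⟨H, le_rfl, hH⟩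
  · exact .inr hH
end

section
/- Let t ∈ ℂ and let F(x,y,z) = (x+y+z)(121·x·y + 121·y·z + 125·z·x) − (88t + 125)·x·y·z (which is 88 times the cubic (x+y+z)((11/8)xy + (11/8)yz + (125/88)zx) − (t + 125/88)xyz). The projective plane cubic F = 0 has a singular point, i.e. there exists (x, y, z) ≠ (0, 0, 0) in ℂ³ at which all three partial derivatives of F vanish, if and only if t·(88t + 125)·(t² − 11t − 1) = 0, i.e. if and only if t ∈ {0, −125/88, (11 ± 5√5)/2}. -/
open MvPolynomial

/-!
On the torus `xyz ≠ 0` the cubic `(x + y + z)(ayz + bzx + cxy) = kxyz` reads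
`(x + y + z)(a/x + b/y + c/z) = k`, and its logarithmic derivatives vanish at a point of the curve
iff `x²R = aS`, `y²R = bS`, `z²R = cS`, where `S = x + y + z` and `R = a/x + b/y + c/z`. Together
with `SR = k` this says that `(x, y, z)` is proportional to a triple `(α, β, γ)` of square roots of
`(a, b, c)` with `(α + β + γ)² = k`, except when `k = 0`, where the cubic splits into a line and a
conic and is singular wherever these meet. For `(a, b, c) = (121, 125, 121)` the square roots of
`a` and `c` are equal or opposite, which gives `t² - 11t - 1 = 0` or `t = 0`.
-/

/-- A singular point of the hypersurface `F = 0` with homogeneous `F`, as a nonzero vector of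
homogeneous coordinates. That `v` lies on the hypersurface is not part of the definition, see
`IsSingularPoint.eval_eq_zero`. -/
def IsSingularPoint {σ R : Type*} [CommRing R] (F : MvPolynomial σ R) (v : σ → R) : Prop :=
  v ≠ 0 ∧ ∀ i, eval v (pderiv i F) = 0

/-- The plane cubic `(x + y + z)(ayz + bzx + cxy) - kxyz`; for fixed weights `a`, `b`, `c` these
form a pencil with parameter `k`. The weight of each variable multiplies the product of the
other two. -/
noncomputable def pencilCubic {R : Type*} [CommRing R] (a b c k : R) : MvPolynomial (Fin 3) R :=
  (X 0 + X 1 + X 2) * (C c * (X 0 * X 1) + C a * (X 1 * X 2) + C b * (X 2 * X 0)) -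
    C k * (X 0 * X 1 * X 2)

theorem IsSingularPoint.eval_eq_zero {σ R : Type*} [Finite σ] [CommRing R] [NoZeroDivisors R]
    {F : MvPolynomial σ R} {v : σ → R} {n : ℕ} (hv : IsSingularPoint F v) (hF : F.IsHomogeneous n)
    (hn : (n : R) ≠ 0) : eval v F = 0 := by
  cases nonempty_fintype σ
  have euler := congrArg (eval v) hF.sum_X_mul_pderiv
  simpa [hv.2, hn] using euler

section CommRing

variable {R : Type*} [CommRing R] (a b c k : R) (v : Fin 3 → R)

theorem isHomogeneous_pencilCubic : (pencilCubic a b c k).IsHomogeneous 3 := by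
  have hX (i : Fin 3) : (X i : MvPolynomial (Fin 3) R).IsHomogeneous 1 := isHomogeneous_X R i
  have hquad (r : R) (i j : Fin 3) : (C r * (X i * X j)).IsHomogeneous 2 :=
    ((hX i).mul (hX j)).C_mul r
  exact ((((hX 0).add (hX 1)).add (hX 2)).mul
    (((hquad c 0 1).add (hquad a 1 2)).add (hquad b 2 0))).sub
      ((((hX 0).mul (hX 1)).mul (hX 2)).C_mul k)

theorem eval_pencilCubic :
    eval v (pencilCubic a b c k) =
      (v 0 + v 1 + v 2) * (c * (v 0 * v 1) + a * (v 1 * v 2) + b * (v 2 * v 0)) -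
        k * (v 0 * v 1 * v 2) := by
  simp [pencilCubic]

theorem eval_pderiv_zero_pencilCubic :
    eval v (pderiv 0 (pencilCubic a b c k)) =
      (c * (v 0 * v 1) + a * (v 1 * v 2) + b * (v 2 * v 0)) +
        (v 0 + v 1 + v 2) * (c * v 1 + b * v 2) - k * (v 1 * v 2) := by
  simp only [pencilCubic, map_sub, map_add, map_mul, Derivation.leibniz, derivation_C, smul_eq_mul,
    pderiv_X_self, pderiv_X_of_ne, ne_eq, Fin.reduceEq, one_ne_zero, not_false_eq_true, map_zero,
    map_one, eval_X, eval_C]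
  ring

theorem eval_pderiv_one_pencilCubic :
    eval v (pderiv 1 (pencilCubic a b c k)) =
      (c * (v 0 * v 1) + a * (v 1 * v 2) + b * (v 2 * v 0)) +
        (v 0 + v 1 + v 2) * (a * v 2 + c * v 0) - k * (v 2 * v 0) := by
  simp only [pencilCubic, map_sub, map_add, map_mul, Derivation.leibniz, derivation_C, smul_eq_mul,
    pderiv_X_self, pderiv_X_of_ne, ne_eq, Fin.reduceEq, zero_ne_one, not_false_eq_true, map_zero,
    map_one, eval_X, eval_C]
  ring

theorem eval_pderiv_two_pencilCubic :
    eval v (pderiv 2 (pencilCubic a b c k)) =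
      (c * (v 0 * v 1) + a * (v 1 * v 2) + b * (v 2 * v 0)) +
        (v 0 + v 1 + v 2) * (b * v 0 + a * v 1) - k * (v 0 * v 1) := by
  simp only [pencilCubic, map_sub, map_add, map_mul, Derivation.leibniz, derivation_C, smul_eq_mul,
    pderiv_X_self, pderiv_X_of_ne, ne_eq, Fin.reduceEq, not_false_eq_true, map_zero, map_one,
    eval_X, eval_C]
  ring

variable {a b c k v}

theorem isSingularPoint_pencilCubic_iff :
    IsSingularPoint (pencilCubic a b c k) v ↔ v ≠ 0 ∧
      (c * (v 0 * v 1) + a * (v 1 * v 2) + b * (v 2 * v 0)) +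
        (v 0 + v 1 + v 2) * (c * v 1 + b * v 2) - k * (v 1 * v 2) = 0 ∧
      (c * (v 0 * v 1) + a * (v 1 * v 2) + b * (v 2 * v 0)) +
        (v 0 + v 1 + v 2) * (a * v 2 + c * v 0) - k * (v 2 * v 0) = 0 ∧
      (c * (v 0 * v 1) + a * (v 1 * v 2) + b * (v 2 * v 0)) +
        (v 0 + v 1 + v 2) * (b * v 0 + a * v 1) - k * (v 0 * v 1) = 0 := by
  simp only [IsSingularPoint, Fin.forall_fin_succ, Fin.succ_zero_eq_one, Fin.succ_one_eq_two,
    IsEmpty.forall_iff, and_true, eval_pderiv_zero_pencilCubic, eval_pderiv_one_pencilCubic,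
    eval_pderiv_two_pencilCubic]

theorem isSingularPoint_pencilCubic_sqrt {α β γ : R} (hne : ![α, β, γ] ≠ 0) :
    IsSingularPoint (pencilCubic (α ^ 2) (β ^ 2) (γ ^ 2) ((α + β + γ) ^ 2)) ![α, β, γ] := by
  refine isSingularPoint_pencilCubic_iff.2 ⟨hne, ?_, ?_, ?_⟩ <;>
    simp only [Matrix.cons_val] <;> ring

theorem isSingularPoint_pencilCubic_of_mem_line_of_mem_conic (hne : v ≠ 0)
    (hline : v 0 + v 1 + v 2 = 0)
    (hconic : c * (v 0 * v 1) + a * (v 1 * v 2) + b * (v 2 * v 0) = 0) :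
    IsSingularPoint (pencilCubic a b c 0) v :=
  isSingularPoint_pencilCubic_iff.2 ⟨hne, by simp [hline, hconic]⟩

end CommRing

section IsDomain

variable {R : Type*} [CommRing R] [IsDomain R] [NeZero (3 : R)] {a b c k : R} {v : Fin 3 → R}

theorem eq_zero_of_mul_mul_add_two_mul_eq_zero {x y : R} (ha : a ≠ 0)
    (hx : a * (x * (x + 2 * y)) = 0) (hy : a * (y * (y + 2 * x)) = 0) : x = 0 ∧ y = 0 := by
  have hcube : a * (3 * y ^ 3) = 0 := by linear_combination (2 * x + 3 * y) * hy - 4 * y * hx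
  obtain rfl : y = 0 := by simpa [ha, NeZero.ne (3 : R)] using hcube
  exact ⟨by simpa [ha] using hx, rfl⟩

namespace IsSingularPoint

theorem pencilCubic_coords_ne_zero (hv : IsSingularPoint (pencilCubic a b c k) v)
    (ha : a ≠ 0) (hb : b ≠ 0) (hc : c ≠ 0) : v 0 ≠ 0 ∧ v 1 ≠ 0 ∧ v 2 ≠ 0 := by
  obtain ⟨hne, h₀, h₁, h₂⟩ := isSingularPoint_pencilCubic_iff.1 hv
  have not_all_zero (hx : v 0 = 0) (hy : v 1 = 0) (hz : v 2 = 0) : False :=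
    hne (funext (by simp [Fin.forall_fin_succ, hx, hy, hz]))
  refine ⟨fun hx => ?_, fun hy => ?_, fun hz => ?_⟩
  · rw [hx] at h₁ h₂
    obtain ⟨hy, hz⟩ := eq_zero_of_mul_mul_add_two_mul_eq_zero ha
      (x := v 1) (y := v 2) (by linear_combination h₂) (by linear_combination h₁)
    exact not_all_zero hx hy hz
  · rw [hy] at h₀ h₂
    obtain ⟨hx, hz⟩ := eq_zero_of_mul_mul_add_two_mul_eq_zero hb
      (x := v 0) (y := v 2) (by linear_combination h₂) (by linear_combination h₀)
    exact not_all_zero hx hy hz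
  · rw [hz] at h₀ h₁
    obtain ⟨hx, hy⟩ := eq_zero_of_mul_mul_add_two_mul_eq_zero hc
      (x := v 0) (y := v 1) (by linear_combination h₁) (by linear_combination h₀)
    exact not_all_zero hx hy hz

theorem pencilCubic_mul_sq_eq (hv : IsSingularPoint (pencilCubic a b c k) v)
    (ha : a ≠ 0) (hb : b ≠ 0) (hc : c ≠ 0) :
    k * v 0 ^ 2 = a * (v 0 + v 1 + v 2) ^ 2 ∧ k * v 1 ^ 2 = b * (v 0 + v 1 + v 2) ^ 2 ∧
      k * v 2 ^ 2 = c * (v 0 + v 1 + v 2) ^ 2 := by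
  obtain ⟨hx, hy, hz⟩ := hv.pencilCubic_coords_ne_zero ha hb hc
  have hF := hv.eval_eq_zero (isHomogeneous_pencilCubic a b c k) (NeZero.ne (3 : R))
  rw [eval_pencilCubic] at hF
  obtain ⟨-, h₀, h₁, h₂⟩ := isSingularPoint_pencilCubic_iff.1 hv
  set S := v 0 + v 1 + v 2
  set Q := c * (v 0 * v 1) + a * (v 1 * v 2) + b * (v 2 * v 0)
  have hxQ : v 0 * Q = a * S * (v 1 * v 2) := by linear_combination v 0 * h₀ - hF
  have hyQ : v 1 * Q = b * S * (v 2 * v 0) := by linear_combination v 1 * h₁ - hF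
  have hzQ : v 2 * Q = c * S * (v 0 * v 1) := by linear_combination v 2 * h₂ - hF
  refine ⟨mul_left_cancel₀ (mul_ne_zero hy hz) ?_, mul_left_cancel₀ (mul_ne_zero hz hx) ?_,
    mul_left_cancel₀ (mul_ne_zero hx hy) ?_⟩
  · linear_combination S * hxQ - v 0 * hF
  · linear_combination S * hyQ - v 1 * hF
  · linear_combination S * hzQ - v 2 * hF

end IsSingularPoint

end IsDomain

section IsAlgClosed

variable {K : Type*} [Field K] [IsAlgClosed K] {a b c k : K}

theorem exists_isSingularPoint_pencilCubic_zero (a b c : K) :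
    ∃ v, IsSingularPoint (pencilCubic a b c 0) v := by
  suffices ∃ x y z : K, ![x, y, z] ≠ 0 ∧ x + y + z = 0 ∧
      c * (x * y) + a * (y * z) + b * (z * x) = 0 by
    obtain ⟨x, y, z, hne, hline, hconic⟩ := this
    exact ⟨_, isSingularPoint_pencilCubic_of_mem_line_of_mem_conic hne hline hconic⟩
  by_cases ha : a = 0
  · exact ⟨0, 1, -1, fun h => one_ne_zero (congrFun h 1), by ring, by simp [ha]⟩
  · obtain ⟨z, hz⟩ := IsAlgClosed.exists_root
      (.C a * .X ^ 2 + .C (a + c - b) * .X + .C c : Polynomial K)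
      (by rw [Polynomial.degree_quadratic ha]; exact two_ne_zero)
    have hroot : a * z ^ 2 + (a + c - b) * z + c = 0 := by simpa using hz
    exact ⟨1, -1 - z, z, fun h => one_ne_zero (congrFun h 0), by ring,
      by linear_combination -hroot⟩

variable [NeZero (3 : K)]

theorem IsSingularPoint.pencilCubic_exists_sqrt {v : Fin 3 → K}
    (hv : IsSingularPoint (pencilCubic a b c k) v) (ha : a ≠ 0) (hb : b ≠ 0) (hc : c ≠ 0)
    (hk : k ≠ 0) :
    ∃ α β γ, α ^ 2 = a ∧ β ^ 2 = b ∧ γ ^ 2 = c ∧ (α + β + γ) ^ 2 = k := by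
  obtain ⟨hkx, hky, hkz⟩ := hv.pencilCubic_mul_sq_eq ha hb hc
  have hS : v 0 + v 1 + v 2 ≠ 0 := by
    intro hS
    have hx := (hv.pencilCubic_coords_ne_zero ha hb hc).1
    simp [hS, hk, hx] at hkx
  obtain ⟨r, rfl⟩ := IsAlgClosed.exists_pow_nat_eq k two_pos
  set S := v 0 + v 1 + v 2 with hS_def
  refine ⟨r * v 0 / S, r * v 1 / S, r * v 2 / S, ?_, ?_, ?_, ?_⟩
  · rw [div_pow, mul_pow, hkx, mul_div_cancel_right₀ _ (pow_ne_zero 2 hS)]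
  · rw [div_pow, mul_pow, hky, mul_div_cancel_right₀ _ (pow_ne_zero 2 hS)]
  · rw [div_pow, mul_pow, hkz, mul_div_cancel_right₀ _ (pow_ne_zero 2 hS)]
  · rw [← add_div, ← add_div, ← mul_add, ← mul_add, ← hS_def, mul_div_cancel_right₀ _ hS]

theorem pencil_W2_singular_iff_general (ha : a ≠ 0) (hb : b ≠ 0) (hc : c ≠ 0) :
    (∃ v, IsSingularPoint (pencilCubic a b c k) v) ↔
      k = 0 ∨ ∃ α β γ, α ^ 2 = a ∧ β ^ 2 = b ∧ γ ^ 2 = c ∧ (α + β + γ) ^ 2 = k := by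
  constructor
  · rintro ⟨v, hv⟩
    exact or_iff_not_imp_left.2 (hv.pencilCubic_exists_sqrt ha hb hc)
  · rintro (rfl | ⟨α, β, γ, rfl, rfl, rfl, rfl⟩)
    · exact exists_isSingularPoint_pencilCubic_zero a b c
    · exact ⟨_, isSingularPoint_pencilCubic_sqrt fun h => ha (by simpa using congrFun h 0)⟩

end IsAlgClosed

theorem exists_sqrt_add_sq_eq_iff (t : ℂ) :
    (∃ α β γ : ℂ, α ^ 2 = 121 ∧ β ^ 2 = 125 ∧ γ ^ 2 = 121 ∧ (α + β + γ) ^ 2 = 88 * t + 125) ↔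
      t = 0 ∨ t ^ 2 - 11 * t - 1 = 0 := by
  constructor
  · rintro ⟨α, β, γ, hα, hβ, hγ, hsum⟩
    rcases sq_eq_sq_iff_eq_or_eq_neg.1 (hα.trans hγ.symm) with rfl | rfl
    · right
      have hαβ : α * β = 22 * t - 121 := by linear_combination hsum / 4 - hα - hβ / 4
      have hαβ_sq : (α * β) ^ 2 = 121 * 125 := by rw [mul_pow, hα, hβ]
      rw [hαβ] at hαβ_sq
      linear_combination hαβ_sq / 484
    · left
      linear_combination (hβ - hsum) / 88
  · rintro (rfl | ht)
    · obtain ⟨β, hβ⟩ := IsAlgClosed.exists_pow_nat_eq (125 : ℂ) two_pos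
      exact ⟨11, β, -11, by norm_num, hβ, by norm_num, by linear_combination hβ⟩
    · exact ⟨11, 2 * t - 11, 11, by norm_num, by linear_combination 4 * ht, by norm_num,
        by linear_combination 4 * ht⟩

theorem sq_sub_eleven_mul_sub_one_eq_zero_iff (t : ℂ) :
    t ^ 2 - 11 * t - 1 = 0 ↔
      t = (11 + 5 * Real.sqrt 5) / 2 ∨ t = (11 - 5 * Real.sqrt 5) / 2 := by
  have hsqrt : (Real.sqrt 5 : ℂ) ^ 2 = 5 := by
    exact_mod_cast Real.sq_sqrt (by norm_num : (0 : ℝ) ≤ 5)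
  have hfactor : t ^ 2 - 11 * t - 1 =
      (t - (11 + 5 * Real.sqrt 5) / 2) * (t - (11 - 5 * Real.sqrt 5) / 2) := by
    linear_combination (25 / 4) * hsqrt
  rw [hfactor, mul_eq_zero, sub_eq_zero, sub_eq_zero]

/-- The member of the pencil
`(x+y+z)(121xy + 121yz + 125zx) − (88t + 125)xyz = 0`
(88 times the cubic `(x+y+z)((11/8)xy + (11/8)yz + (125/88)zx) − (t + 125/88)xyz`)
has a singular point — a nonzero point where all three partial derivatives vanish —
iff `t·(88t + 125)·(t² − 11t − 1) = 0`, i.e. iff `t ∈ {0, −125/88, (11 ± 5√5)/2}`. -/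
theorem pencil_W2_singular_iff (t : ℂ) :
    ((∃ v : Fin 3 → ℂ, v ≠ 0 ∧ ∀ i : Fin 3,
        eval v (pderiv i
          ((X 0 + X 1 + X 2) *
              (C 121 * (X 0 * X 1) + C 121 * (X 1 * X 2) + C 125 * (X 2 * X 0)) -
            C (88 * t + 125) * (X 0 * X 1 * X 2) : MvPolynomial (Fin 3) ℂ)) = 0) ↔
      t * (88 * t + 125) * (t ^ 2 - 11 * t - 1) = 0) ∧
    (t * (88 * t + 125) * (t ^ 2 - 11 * t - 1) = 0 ↔
      t = 0 ∨ t = -125 / 88 ∨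
        t = (11 + 5 * Real.sqrt 5) / 2 ∨ t = (11 - 5 * Real.sqrt 5) / 2) := by
  constructor
  · refine (pencil_W2_singular_iff_general (a := 121) (b := 125) (c := 121) (k := 88 * t + 125)
      (by norm_num) (by norm_num) (by norm_num)).trans ?_
    rw [exists_sqrt_add_sq_eq_iff, mul_eq_zero, mul_eq_zero, or_left_comm, or_assoc]
  · have hlinear : 88 * t + 125 = 0 ↔ t = -125 / 88 := by
      rw [eq_div_iff (by norm_num), mul_comm, add_eq_zero_iff_eq_neg]
    rw [mul_eq_zero, mul_eq_zero, or_assoc, hlinear, sq_sub_eleven_mul_sub_one_eq_zero_iff]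
end
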